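/- Let Ψ be a proper subset of Δ and set N := {β ∈ Φ⁺ : m_δ(β) ≥ 1 for some δ ∈ Δ∖Ψ} (the roots of g/k for the standard parabolic subgroup K defined by Ψ). If it is not the case that Δ∖Ψ consists of a single simple root α with m_α(θ) = 1 (i.e., if G/K is not a cominuscule flag variety), then there exist β_1, β_2 ∈ N such that β_1 + β_2 ∈ Φ. -/

import Mathlib

open scoped RealInnerProductSpace

/-- The Cartan pairing `⟨β, γ⟩ = 2(β,γ)/(γ,γ)`. -/
noncomputable def rpair {V : Type*} [NormedAddCommGroup V] [InnerProductSpace ℝ V]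
    (β γ : V) : ℝ := 2 * ⟪β, γ⟫ / ⟪γ, γ⟫

/-- An irreducible reduced crystallographic root system in a real inner product space,
equipped with a base `Δ` of simple roots, the coefficient function `m` (so that
`β = ∑_{δ ∈ Δ} m β δ • δ` for roots `β`) and the highest root `θ`. -/
structure IrredRootSystem (V : Type*) [NormedAddCommGroup V] [InnerProductSpace ℝ V] where
  Φ : Set V
  Δ : Finset V
  m : V → V → ℤ
  θ : V
  finite : Φ.Finite
  zero_notMem : (0 : V) ∉ Φ
  spans : Submodule.span ℝ Φ = ⊤
  neg_mem : ∀ β ∈ Φ, -β ∈ Φ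
  reflect_mem : ∀ β ∈ Φ, ∀ γ ∈ Φ, β - rpair β γ • γ ∈ Φ
  crystallographic : ∀ β ∈ Φ, ∀ γ ∈ Φ, ∃ z : ℤ, rpair β γ = z
  reduced : ∀ β ∈ Φ, ∀ t : ℝ, t • β ∈ Φ → t = 1 ∨ t = -1
  irreducible : ¬ ∃ A B : Set V, A.Nonempty ∧ B.Nonempty ∧ Disjoint A B ∧ A ∪ B = Φ ∧
      ∀ β ∈ A, ∀ γ ∈ B, ⟪β, γ⟫ = 0
  base_subset : ↑Δ ⊆ Φ
  base_indep : LinearIndependent ℝ (fun δ : Δ => (δ : V))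
  base_repr : ∀ β ∈ Φ, β = ∑ δ ∈ Δ, (m β δ : ℝ) • δ
  base_sign : ∀ β ∈ Φ, (∀ δ ∈ Δ, 0 ≤ m β δ) ∨ (∀ δ ∈ Δ, m β δ ≤ 0)
  theta_mem : θ ∈ Φ
  theta_highest : ∀ β ∈ Φ, ∀ δ ∈ Δ, m β δ ≤ m θ δ

namespace IrredRootSystem

variable {V : Type*} [NormedAddCommGroup V] [InnerProductSpace ℝ V]

/-- The positive roots `Φ⁺`. -/
def Pos (D : IrredRootSystem V) : Set V := {β | β ∈ D.Φ ∧ ∀ δ ∈ D.Δ, 0 ≤ D.m β δ}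

/-- The negative roots `Φ⁻`. -/
def Neg (D : IrredRootSystem V) : Set V := {β | β ∈ D.Φ ∧ ∀ δ ∈ D.Δ, D.m β δ ≤ 0}

/-- A long root: a root of maximal squared length. -/
def IsLong (D : IrredRootSystem V) (β : V) : Prop :=
  β ∈ D.Φ ∧ ∀ γ ∈ D.Φ, ⟪γ, γ⟫ ≤ ⟪β, β⟫

/-- `Φ(g/p)`: the roots whose coefficient on the cominuscule simple root `α` is `1`. -/
def gp (D : IrredRootSystem V) (α : V) : Set V := {β | β ∈ D.Φ ∧ D.m β α = 1}

/-- An orthogonal sequence of long roots in `Φ(g/p)`. -/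
def IsOrthLongSeq (D : IrredRootSystem V) (α : V) {r : ℕ} (a : Fin r → V) : Prop :=
  (∀ i, D.IsLong (a i)) ∧ (∀ i, a i ∈ D.gp α) ∧ ∀ i j, i ≠ j → ⟪a i, a j⟫ = 0

end IrredRootSystem

/-!
Let the degree of a vector be the sum of its coefficients along the simple roots outside `Ψ`, so
that `N` consists of the roots of positive degree. Every simple root occurs in `θ`, hence `θ` has
degree at least `2` unless `Δ \ Ψ = {α}` with `m_α(θ) = 1`. Now write `θ` as a sum of simple
roots all of whose partial sums are roots. Let `δ` be the last summand of degree `1`: the partial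
sum just before it still has degree at least `1`, so it lies in `N`, as does `δ`, and their sum is
a root.
-/

open Module

section BaseOfRootPairing

variable {ι R M N A : Type*} [CommRing R] [CharZero R] [AddCommGroup M] [Module R M]
  [AddCommGroup N] [Module R N] {P : RootPairing ι R M N}
  [AddCommGroup A]

theorem isPos_of_map_root_pos [Finite ι] [IsDomain R] [P.IsCrystallographic] [PartialOrder A]
    [IsOrderedAddMonoid A] (b : P.Base) (f : M →+ A)
    (hf : ∀ j ∈ b.support, 0 ≤ f (P.root j)) {i : ι} (hi : 0 < f (P.root i)) : b.IsPos i := by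
  let := P.indexNeg
  refine (RootPairing.Base.IsPos.or_neg b i).resolve_right fun hneg => hi.not_ge ?_
  have : 0 ≤ f (P.root (-i)) :=
    hneg.induction_on_add hf fun i j k hk hi hj => by
      rw [hk, map_add]
      exact add_nonneg hi (hf j hj)
  simpa using this

theorem exists_root_eq_add_of_lt_map_root [Finite ι] [IsDomain R] [P.IsCrystallographic]
    [LinearOrder A] [IsOrderedAddMonoid A] (b : P.Base) (f : M →+ A) {c : A}
    (hf : ∀ j ∈ b.support, f (P.root j) ≤ c) {i : ι} (hi : b.IsPos i) (hc : c < f (P.root i)) :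
    ∃ j k l, 0 < f (P.root j) ∧ 0 < f (P.root k) ∧ P.root l = P.root j + P.root k := by
  revert hc
  refine hi.induction_on_add (p := fun i => c < f (P.root i) → _)
    (fun j hj hc => absurd hc (hf j hj).not_gt) ?_
  intro i j k hk ih hj hc
  rw [hk, map_add] at hc
  by_cases hj₀ : 0 < f (P.root j)
  · have hi₀ : 0 < f (P.root i) := pos_of_lt_add_left ((hf j hj).trans_lt hc)
    exact ⟨i, j, k, hi₀, hj₀, hk⟩
  · exact ih (hc.trans_le (add_le_of_nonpos_right (not_lt.1 hj₀)))

end BaseOfRootPairing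

theorem sum_intCast_smul_mem_closure {R M : Type*} [Ring R] [AddCommGroup M] [Module R M]
    {s : Finset M} {c : M → ℤ} (hc : ∀ v ∈ s, 0 ≤ c v) :
    ∑ v ∈ s, (c v : R) • v ∈ AddSubmonoid.closure (s : Set M) := by
  refine sum_mem fun v hv => ?_
  lift c v to ℕ using hc v hv with n
  simpa only [Int.cast_natCast, Nat.cast_smul_eq_nsmul] using
    nsmul_mem (AddSubmonoid.subset_closure hv) n

theorem isPerfPair_innerₗ {V : Type*} [NormedAddCommGroup V] [InnerProductSpace ℝ V]
    [FiniteDimensional ℝ V] : (innerₗ V).IsPerfPair := by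
  have hinj : Function.Injective (innerₗ V) := fun x y h =>
    ext_inner_right ℝ fun v => DFunLike.congr_fun h v
  exact .of_injective hinj (by rwa [flip_innerₗ])

namespace IrredRootSystem

variable {V : Type*} [NormedAddCommGroup V] [InnerProductSpace ℝ V] (D : IrredRootSystem V)

instance finite_roots : Finite D.Φ := D.finite

theorem finiteDimensional (D : IrredRootSystem V) : FiniteDimensional ℝ V :=
  ⟨D.spans ▸ Submodule.fg_span D.finite⟩

/-- The coroot of `β` under the identification of `V` with its dual. -/
noncomputable def coroot (β : V) : V := (2 / ⟪β, β⟫) • β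

theorem coroot_involutive : Function.Involutive (coroot (V := V)) := fun β => by
  rcases eq_or_ne β 0 with rfl | hβ
  · simp [coroot]
  · have := inner_self_ne_zero (𝕜 := ℝ).2 hβ
    simp only [coroot, real_inner_smul_left, real_inner_smul_right, smul_smul]
    rw [show 2 / (2 / ⟪β, β⟫ * (2 / ⟪β, β⟫ * ⟪β, β⟫)) * (2 / ⟪β, β⟫) = (1 : ℝ) by field_simp,
      one_smul]

theorem inner_coroot (β γ : V) : ⟪β, coroot γ⟫ = rpair β γ := by
  rw [coroot, real_inner_smul_right, rpair, div_mul_eq_mul_div]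

theorem inner_coroot_self {β : V} (hβ : β ∈ D.Φ) : ⟪β, coroot β⟫ = 2 := by
  have hβ₀ : β ≠ 0 := ne_of_mem_of_not_mem hβ D.zero_notMem
  rw [inner_coroot, rpair, mul_div_cancel_right₀ _ (inner_self_ne_zero.2 hβ₀)]

/-- The root system `D` as a `RootPairing` of `V` with itself under the inner product. -/
noncomputable def rootPairing : RootPairing D.Φ ℝ V V :=
  have := D.finiteDimensional
  have := isPerfPair_innerₗ (V := V)
  RootPairing.mk'' (innerₗ V) (.subtype _)
    ((Function.Embedding.subtype _).trans ⟨coroot, coroot_involutive.injective⟩)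
    (fun β => D.inner_coroot_self β.2)
    (by
      rintro γ - ⟨β, rfl⟩
      refine ⟨⟨_, D.reflect_mem β β.2 γ γ.2⟩, ?_⟩
      simp [preReflection_apply, ← inner_coroot, real_inner_comm])
    (by simpa using D.spans)

@[simp]
theorem root_rootPairing (β : D.Φ) : D.rootPairing.root β = β := rfl

theorem pairing_rootPairing (β γ : D.Φ) : D.rootPairing.pairing β γ = rpair (β : V) γ :=
  inner_coroot _ _

instance isCrystallographic_rootPairing : D.rootPairing.IsCrystallographic where
  exists_value β γ := by
    obtain ⟨z, hz⟩ := D.crystallographic β β.2 γ γ.2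
    exact ⟨z, by rw [pairing_rootPairing, hz, eq_intCast]⟩

instance isRootSystem_rootPairing : D.rootPairing.IsRootSystem :=
  have := D.finiteDimensional
  have := isPerfPair_innerₗ (V := V)
  RootPairing.isRootSystem_mk'' (hsp := by simpa using D.spans)
    D.isCrystallographic_rootPairing.exists_value

instance isReduced_rootPairing : D.rootPairing.IsReduced where
  eq_or_eq_neg β γ h := by
    rw [LinearIndependent.pair_iff' (D.rootPairing.ne_zero β)] at h
    push Not at h
    obtain ⟨t, ht : t • (β : V) = γ⟩ := h
    rcases D.reduced β β.2 t (ht ▸ γ.2) with rfl | rfl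
    · exact .inl (by simpa using ht)
    · exact .inr (by simp [← ht])

theorem mem_closure_base_or_neg_mem {β : V} (hβ : β ∈ D.Φ) :
    β ∈ AddSubmonoid.closure (D.Δ : Set V) ∨ -β ∈ AddSubmonoid.closure (D.Δ : Set V) := by
  refine (D.base_sign β hβ).imp (fun h => ?_) fun h => ?_
  · rw [D.base_repr β hβ]
    exact sum_intCast_smul_mem_closure h
  · rw [D.base_repr β hβ, ← Finset.sum_neg_distrib]
    simp only [← neg_smul, ← Int.cast_neg]
    exact sum_intCast_smul_mem_closure (c := fun δ => -D.m β δ) fun δ hδ => neg_nonneg.2 (h δ hδ)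

/-- The simple roots `Δ` as a base of `D.rootPairing`. -/
noncomputable def base : D.rootPairing.Base :=
  have himage : D.rootPairing.root '' {β : D.Φ | (β : V) ∈ D.Δ} = D.Δ :=
    Subtype.coe_image_of_subset D.base_subset
  RootPairing.Base.mk' D.rootPairing {β | (β : V) ∈ D.Δ}
    (by
      rw [linearIndepOn_iff_image D.rootPairing.root.injective.injOn, himage]
      exact D.base_indep)
    (fun β => by
      rw [himage]
      exact D.mem_closure_base_or_neg_mem β.2)

@[simp]
theorem mem_support_base {β : D.Φ} : β ∈ D.base.support ↔ (β : V) ∈ D.Δ := by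
  simp [base, RootPairing.Base.mk']

/-- The simple roots as a vector space basis of `V`. -/
noncomputable def simpleBasis : Basis D.Δ ℝ V :=
  .mk D.base_indep <| by
    rw [← D.spans, Submodule.span_le]
    intro β hβ
    rw [SetLike.mem_coe, D.base_repr β hβ]
    exact sum_mem fun δ hδ => Submodule.smul_mem _ _ (Submodule.subset_span ⟨⟨δ, hδ⟩, rfl⟩)

@[simp]
theorem simpleBasis_apply (δ : D.Δ) : D.simpleBasis δ = δ :=
  Basis.mk_apply _ _ δ

theorem simpleBasis_repr {β : V} (hβ : β ∈ D.Φ) (δ : D.Δ) :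
    D.simpleBasis.repr β δ = D.m β δ := by
  have hsum : β = ∑ δ : D.Δ, (D.m β δ : ℝ) • D.simpleBasis δ := by
    simp only [simpleBasis_apply]
    rw [Finset.sum_coe_sort D.Δ fun δ => (D.m β δ : ℝ) • δ]
    exact D.base_repr β hβ
  rw [hsum, D.simpleBasis.repr_sum_self, ← hsum]

theorem m_self {δ : V} (hδ : δ ∈ D.Δ) : D.m δ δ = 1 := by
  have hself := DFunLike.congr_fun (D.simpleBasis.repr_self ⟨δ, hδ⟩) ⟨δ, hδ⟩
  rw [simpleBasis_apply, D.simpleBasis_repr (D.base_subset hδ), Finsupp.single_eq_same] at hself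
  exact_mod_cast hself

theorem one_le_m_theta {δ : V} (hδ : δ ∈ D.Δ) : 1 ≤ D.m D.θ δ :=
  D.m_self hδ ▸ D.theta_highest δ (D.base_subset hδ) δ hδ

open Classical in
/-- The grading of `V` by the parabolic subgroup defined by `Ψ`: the sum of the coefficients along
the simple roots outside `Ψ`. -/
noncomputable def degree (Ψ : Finset V) : V →ₗ[ℝ] ℝ :=
  D.simpleBasis.constr ℝ fun δ => if (δ : V) ∈ Ψ then 0 else 1

open Classical in
theorem degree_simple (Ψ : Finset V) {δ : V} (hδ : δ ∈ D.Δ) :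
    D.degree Ψ δ = if δ ∈ Ψ then 0 else 1 := by
  simpa only [degree, simpleBasis_apply] using
    D.simpleBasis.constr_basis ℝ (fun δ => if (δ : V) ∈ Ψ then (0 : ℝ) else 1) ⟨δ, hδ⟩

open Classical in
theorem degree_eq_sum (Ψ : Finset V) {β : V} (hβ : β ∈ D.Φ) :
    D.degree Ψ β = ((∑ δ ∈ D.Δ \ Ψ, D.m β δ : ℤ) : ℝ) := by
  conv_lhs => rw [D.base_repr β hβ, map_sum]
  simp only [map_smul, smul_eq_mul]
  rw [Finset.sum_congr rfl fun δ hδ => by rw [D.degree_simple Ψ hδ]]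
  simp [Finset.sum_ite, Finset.sdiff_eq_filter]

theorem mem_Pos_and_exists_one_le_m_of_degree_pos {Ψ : Finset V} {β : V} (hβ : β ∈ D.Φ)
    (hdeg : 0 < D.degree Ψ β) : β ∈ D.Pos ∧ ∃ δ ∈ D.Δ, δ ∉ Ψ ∧ 1 ≤ D.m β δ := by
  classical
  rw [D.degree_eq_sum Ψ hβ, Int.cast_pos] at hdeg
  obtain ⟨δ, hδ, hm⟩ : ∃ δ ∈ D.Δ \ Ψ, 0 < D.m β δ := by
    contrapose! hdeg
    exact Finset.sum_nonpos hdeg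
  rw [Finset.mem_sdiff] at hδ
  exact ⟨⟨hβ, (D.base_sign β hβ).resolve_right fun hneg => (hneg δ hδ.1).not_gt hm⟩,
    δ, hδ.1, hδ.2, hm⟩

theorem one_lt_degree_theta {Ψ : Finset V} (hΨ : ¬ D.Δ ⊆ Ψ)
    (hnotcom : ¬ ∃ α ∈ D.Δ, (↑D.Δ : Set V) \ ↑Ψ = {α} ∧ D.m D.θ α = 1) :
    1 < D.degree Ψ D.θ := by
  classical
  have hone : ∀ δ ∈ D.Δ \ Ψ, 1 ≤ D.m D.θ δ := fun δ hδ =>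
    D.one_le_m_theta (Finset.mem_sdiff.1 hδ).1
  have hcard : ((D.Δ \ Ψ).card : ℤ) ≤ ∑ δ ∈ D.Δ \ Ψ, D.m D.θ δ := by
    simpa using Finset.card_nsmul_le_sum _ _ 1 hone
  rw [D.degree_eq_sum Ψ D.theta_mem]
  suffices 1 < ∑ δ ∈ D.Δ \ Ψ, D.m D.θ δ by exact_mod_cast this
  rcases eq_or_lt_of_le (Finset.one_le_card.2 (Finset.sdiff_nonempty.2 hΨ)) with hsingle | hmany
  · obtain ⟨α, hα⟩ := Finset.card_eq_one.1 hsingle.symm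
    have hα_mem : α ∈ D.Δ \ Ψ := hα ▸ Finset.mem_singleton_self α
    rw [hα, Finset.sum_singleton]
    refine (hone α hα_mem).lt_of_ne' fun hm => hnotcom ⟨α, (Finset.mem_sdiff.1 hα_mem).1, ?_, hm⟩
    rw [← Finset.coe_sdiff, hα, Finset.coe_singleton]
  · exact (Int.ofNat_lt.2 hmany).trans_le hcard

theorem exists_add_mem_of_one_lt_degree {Ψ : Finset V} {β : V} (hβ : β ∈ D.Φ)
    (hdeg : 1 < D.degree Ψ β) :
    ∃ β₁ ∈ D.Φ, ∃ β₂ ∈ D.Φ, 0 < D.degree Ψ β₁ ∧ 0 < D.degree Ψ β₂ ∧ β₁ + β₂ ∈ D.Φ := by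
  classical
  let f : V →+ ℝ := (D.degree Ψ).toAddMonoidHom
  have hsimple : ∀ δ ∈ D.base.support, 0 ≤ f (D.rootPairing.root δ) ∧
      f (D.rootPairing.root δ) ≤ 1 := fun δ hδ => by
    have : f (D.rootPairing.root δ) = _ := D.degree_simple Ψ (D.mem_support_base.1 hδ)
    rw [this]
    split_ifs <;> norm_num
  have hpos : D.base.IsPos ⟨β, hβ⟩ :=
    isPos_of_map_root_pos _ f (fun δ hδ => (hsimple δ hδ).1) (one_pos.trans hdeg)
  obtain ⟨β₁, β₂, γ, h₁, h₂, hγ⟩ :=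
    exists_root_eq_add_of_lt_map_root _ f (fun δ hδ => (hsimple δ hδ).2) hpos hdeg
  exact ⟨β₁, β₁.2, β₂, β₂.2, h₁, h₂, hγ ▸ γ.2⟩

end IrredRootSystem

/-- If the standard parabolic determined by `Ψ ⊊ Δ` is not cominuscule, then
among the roots of `g/k` there are two whose sum is again a root. -/
theorem noncominuscule_exists_sum_root {V : Type*} [NormedAddCommGroup V]
    [InnerProductSpace ℝ V] (D : IrredRootSystem V)
    (Ψ : Finset V) (hΨ : Ψ ⊆ D.Δ) (hproper : Ψ ≠ D.Δ)
    (hnotcom : ¬ ∃ α ∈ D.Δ, (↑D.Δ : Set V) \ ↑Ψ = {α} ∧ D.m D.θ α = 1) :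
    ∃ β₁ ∈ {β | β ∈ D.Pos ∧ ∃ δ ∈ D.Δ, δ ∉ Ψ ∧ 1 ≤ D.m β δ},
    ∃ β₂ ∈ {β | β ∈ D.Pos ∧ ∃ δ ∈ D.Δ, δ ∉ Ψ ∧ 1 ≤ D.m β δ},
      β₁ + β₂ ∈ D.Φ := by
  obtain ⟨β₁, hβ₁, β₂, hβ₂, hdeg₁, hdeg₂, hadd⟩ := D.exists_add_mem_of_one_lt_degree D.theta_mem
    (D.one_lt_degree_theta (fun hle => hproper (hΨ.antisymm hle)) hnotcom)
  exact ⟨β₁, D.mem_Pos_and_exists_one_le_m_of_degree_pos hβ₁ hdeg₁,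
    β₂, D.mem_Pos_and_exists_one_le_m_of_degree_pos hβ₂ hdeg₂, hadd⟩
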